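/- Assume condition (D1) (A is increasing on [0,1]). Let T ∈ (0,∞], and let F¹ and F² be two elements of 𝓕(T) such that for every g ∈ C_c^∞([0,T)×ℝ) and every t ∈ [0,T), both F¹ and F² satisfy the weak formulation of the Cauchy problem (with the same initial condition H*m). Then F¹ = F², i.e., for every t ∈ [0,T), F¹_t(x) = F²_t(x) for all x ∈ ℝ. -/

import Mathlib

open MeasureTheory Set Filter Topology Function
open scoped ENNReal
noncomputable section

/-- `primitive f u = ∫₀^u f(v) dv`. -/
def primitive (f : ℝ → ℝ) : ℝ → ℝ := fun u => ∫ v in (0:ℝ)..u, f v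

/-- The cumulative distribution function `H * μ` of a measure `μ` on `ℝ`. -/
def cdfOf (μ : MeasureTheory.Measure ℝ) : ℝ → ℝ := fun x => (μ (Set.Iic x)).toReal

/-- `F` satisfies, on the time interval `[0,T)` (where `T ∈ (0,∞]`), the weak formulation of
`∂ₜ F = (1/2) ∂ₓₓ (A (F)) - ∂ₓ (B (F))` with initial condition `F₀`, for test functions `g`
that are smooth with compact support contained in `[0,T) × ℝ`. -/
def IsWeakSolutionOn (A B : ℝ → ℝ) (F₀ : ℝ → ℝ) (T : ℝ≥0∞) (F : ℝ → ℝ → ℝ) : Prop :=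
  ∀ g : ℝ → ℝ → ℝ, ContDiff ℝ (⊤ : ℕ∞) (Function.uncurry g) →
    HasCompactSupport (Function.uncurry g) →
    (∀ q : ℝ × ℝ, q ∈ tsupport (Function.uncurry g) → ENNReal.ofReal q.1 < T) →
    ∀ t : ℝ, 0 ≤ t → ENNReal.ofReal t < T →
      ((∫ x : ℝ, g t x * F t x) - ∫ x : ℝ, g 0 x * F₀ x) =
        ∫ x : ℝ, ∫ s in (0:ℝ)..t,
          ((1/2) * A (F s x) * deriv (deriv (fun y => g s y)) x
            + B (F s x) * deriv (fun y => g s y) x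
            + F s x * deriv (fun r => g r x) s)

/-- Membership in the class `𝓕(T)` for `T ∈ (0,∞]`: on `[0,T)`, `F t` is the cdf of `P t`
for a weakly continuous flow `t ↦ P t` of probability measures with finite first moments,
the first moment being locally integrable in time on `[0,T)`. -/
def MemFT (T : ℝ≥0∞) (F : ℝ → ℝ → ℝ) : Prop :=
  ∃ P : ℝ → ProbabilityMeasure ℝ,
    ContinuousOn P {t : ℝ | 0 ≤ t ∧ ENNReal.ofReal t < T} ∧
    (∀ t : ℝ, 0 ≤ t → ENNReal.ofReal t < T → Integrable (fun x => |x|) (P t : Measure ℝ)) ∧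
    (∀ K : Set ℝ, IsCompact K → K ⊆ {t : ℝ | 0 ≤ t ∧ ENNReal.ofReal t < T} →
      IntegrableOn (fun t => ∫ x, |x| ∂(P t : Measure ℝ)) K) ∧
    (∀ t : ℝ, 0 ≤ t → ENNReal.ofReal t < T →
      ∀ x : ℝ, F t x = ((P t : Measure ℝ) (Set.Iic x)).toReal)


/-- A bounded, jointly measurable function of (time, space), right-continuous in space, and
continuous in time at a.e. space point. -/
structure Nice (C : ℝ) (h : ℝ → ℝ → ℝ) : Prop where
  meas : Measurable (uncurry h)
  bdd : ∀ t x, |h t x| ≤ C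
  rc : ∀ t x, ContinuousWithinAt (h t) (Ici x) x
  tc : ∀ t, ∀ᵐ x, ContinuousAt (fun s => h s x) t

lemma joint_meas (F : ℝ → ℝ → ℝ) (h1 : ∀ x, Measurable (fun s => F s x))
    (h2 : ∀ t x, ContinuousWithinAt (F t) (Ici x) x) : Measurable (uncurry F) := by
  have key : ∀ n : ℕ, Measurable (fun q : ℝ × ℝ => F q.1 (((⌊((n:ℝ)+1) * q.2⌋ : ℝ) + 1) / ((n:ℝ)+1))) := by
    intro n
    have e : Measurable (fun p : ℝ × ℤ => F p.1 (((p.2 : ℝ) + 1) / ((n:ℝ)+1))) :=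
      measurable_from_prod_countable_left (fun y => h1 (((y : ℝ) + 1) / ((n:ℝ)+1)))
    have e2 : Measurable (fun q : ℝ × ℝ => ((q.1, ⌊((n:ℝ)+1) * q.2⌋) : ℝ × ℤ)) := by
      fun_prop
    exact e.comp e2
  refine measurable_of_tendsto_metrizable key ?_
  rw [tendsto_pi_nhds]
  rintro ⟨t, x⟩
  have hx : Tendsto (fun n : ℕ => (((⌊((n:ℝ)+1) * x⌋ : ℝ) + 1) / ((n:ℝ)+1))) atTop (𝓝[≥] x) := by
    refine tendsto_nhdsWithin_iff.2 ⟨?_, Eventually.of_forall fun n => ?_⟩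
    · have hz : Tendsto (fun n : ℕ => x + 1 / ((n:ℝ)+1)) atTop (𝓝 (x + 0)) :=
        tendsto_const_nhds.add tendsto_one_div_add_atTop_nhds_zero_nat
      rw [add_zero] at hz
      refine tendsto_of_tendsto_of_tendsto_of_le_of_le tendsto_const_nhds hz ?_ ?_
      · intro n
        have hn : (0:ℝ) < (n:ℝ) + 1 := by positivity
        show x ≤ _
        rw [le_div_iff₀ hn]
        have := (Int.lt_floor_add_one (((n:ℝ)+1) * x)).le
        linarith
      · intro n
        have hn : (0:ℝ) < (n:ℝ) + 1 := by positivity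
        show _ ≤ x + 1 / ((n:ℝ)+1)
        rw [div_le_iff₀ hn]
        have := (Int.floor_le (((n:ℝ)+1) * x))
        field_simp
        linarith
    · have hn : (0:ℝ) < (n:ℝ) + 1 := by positivity
      show x ≤ _
      rw [le_div_iff₀ hn]
      have := (Int.lt_floor_add_one (((n:ℝ)+1) * x)).le
      linarith
  exact (h2 t x).tendsto.comp hx

lemma cdf_nice (P : ℝ → ProbabilityMeasure ℝ) (hP : Continuous P) :
    Nice 1 (fun t x => ((P t : Measure ℝ) (Iic x)).toReal) := by
  have rc : ∀ t x, ContinuousWithinAt (fun x => ((P t : Measure ℝ) (Iic x)).toReal) (Ici x) x := by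
    intro t x
    have := (ProbabilityTheory.cdf (P t : Measure ℝ)).right_continuous x
    have e : (fun x => ((P t : Measure ℝ) (Iic x)).toReal) =
        ProbabilityTheory.cdf (P t : Measure ℝ) := by
      funext y
      rw [ProbabilityTheory.cdf_eq_real]; rfl
    rw [e]; exact this
  refine ⟨joint_meas _ ?_ rc, ?_, rc, ?_⟩
  · intro x
    refine Measurable.ennreal_toReal ?_
    refine measurable_of_Iio fun c => IsOpen.measurableSet ?_
    rw [isOpen_iff_mem_nhds]
    intro t ht
    have := ProbabilityMeasure.limsup_measure_closed_le_of_tendsto (hP.tendsto t) (isClosed_Iic (a := x))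
    exact eventually_lt_of_limsup_lt (lt_of_le_of_lt this ht)
  · intro t x
    rw [abs_of_nonneg ENNReal.toReal_nonneg]
    exact ENNReal.toReal_le_of_le_ofReal zero_le_one (by simpa using prob_le_one)
  · intro t
    have hc : Set.Countable {x | 0 < (P t : Measure ℝ) {x}} :=
      Measure.countable_meas_pos_of_disjoint_iUnion (fun x => measurableSet_singleton x)
        (fun x y hxy => by simpa using hxy)
    filter_upwards [hc.ae_notMem volume] with x hx
    have hx : (P t : Measure ℝ) {x} = 0 := by simpa using hx
    have := ProbabilityMeasure.tendsto_measure_of_null_frontier_of_tendsto' (hP.tendsto t)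
      (E := Iic x) (by rw [frontier_Iic]; exact hx)
    exact (ENNReal.tendsto_toReal (measure_ne_top _ _)).comp this

lemma Nice.sub {C D : ℝ} {h k : ℝ → ℝ → ℝ} (hh : Nice C h) (hk : Nice D k) :
    Nice (C + D) (fun t x => h t x - k t x) := by
  refine ⟨hh.meas.sub hk.meas, ?_, ?_, ?_⟩
  · intro t x
    exact (abs_sub _ _).trans (add_le_add (hh.bdd t x) (hk.bdd t x))
  · intro t x
    exact (hh.rc t x).sub (hk.rc t x)
  · intro t
    filter_upwards [hh.tc t, hk.tc t] with x h1 h2 using h1.sub h2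

lemma Nice.neg {C : ℝ} {h : ℝ → ℝ → ℝ} (hh : Nice C h) :
    Nice C (fun t x => - h t x) := by
  refine ⟨hh.meas.neg, ?_, ?_, ?_⟩
  · intro t x
    simpa using hh.bdd t x
  · intro t x
    exact (hh.rc t x).neg
  · intro t
    filter_upwards [hh.tc t] with x h1 using h1.neg

lemma Nice.comp {C D : ℝ} {h : ℝ → ℝ → ℝ} (hh : Nice C h) {φ : ℝ → ℝ} (hφ : Continuous φ)
    (hb : ∀ u, |φ u| ≤ D) : Nice D (fun t x => φ (h t x)) := by
  refine ⟨hφ.measurable.comp hh.meas, fun t x => hb _, ?_, ?_⟩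
  · intro t x
    exact hφ.continuousAt.comp_continuousWithinAt (hh.rc t x)
  · intro t
    filter_upwards [hh.tc t] with x h1 using hφ.continuousAt.comp h1

/-- time primitive -/
def tprim (h : ℝ → ℝ → ℝ) (t x : ℝ) : ℝ := ∫ s in (0:ℝ)..t, h s x

section tp
variable {C : ℝ} {h : ℝ → ℝ → ℝ}

lemma Nice.C_nonneg (hh : Nice C h) : 0 ≤ C := (abs_nonneg _).trans (hh.bdd 0 0)

lemma Nice.meas_t (hh : Nice C h) (x : ℝ) : Measurable (fun s => h s x) :=
  hh.meas.comp (measurable_id.prodMk measurable_const)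

lemma Nice.meas_x (hh : Nice C h) (t : ℝ) : Measurable (h t) :=
  hh.meas.comp (measurable_const.prodMk measurable_id)

lemma Nice.int_t (hh : Nice C h) (x a b : ℝ) : IntervalIntegrable (fun s => h s x) volume a b := by
  refine (intervalIntegrable_const (c := C)).mono_fun (hh.meas_t x).aestronglyMeasurable ?_
  refine Eventually.of_forall fun s => ?_
  simp only [Real.norm_eq_abs]
  exact (hh.bdd s x).trans (le_abs_self _)

lemma tprim_sub (hh : Nice C h) (s t x : ℝ) :
    tprim h t x - tprim h s x = ∫ r in s..t, h r x := by
  unfold tprim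
  rw [intervalIntegral.integral_interval_sub_left (hh.int_t x _ _) (hh.int_t x _ _)]

lemma tprim_lip (hh : Nice C h) (s t x : ℝ) :
    |tprim h t x - tprim h s x| ≤ C * |t - s| := by
  rw [tprim_sub hh]
  exact intervalIntegral.norm_integral_le_of_norm_le_const (f := fun r => h r x)
    (fun r _ => hh.bdd r x)

lemma tprim_zero (x : ℝ) : tprim h 0 x = 0 := by simp [tprim]

lemma tprim_bdd (hh : Nice C h) (t x : ℝ) : |tprim h t x| ≤ C * |t| := by
  simpa [tprim_zero] using tprim_lip hh 0 t x

lemma tprim_meas (hh : Nice C h) (t : ℝ) : Measurable (tprim h t) := by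
  unfold tprim
  have hm : StronglyMeasurable (fun q : ℝ × ℝ => h q.2 q.1) :=
    (hh.meas.comp measurable_swap).stronglyMeasurable
  simp only [intervalIntegral]
  exact ((hm.integral_prod_right (ν := volume.restrict (Ioc 0 t))).sub
    (hm.integral_prod_right (ν := volume.restrict (Ioc t 0)))).measurable

lemma tprim_rc (hh : Nice C h) (t x : ℝ) : ContinuousWithinAt (tprim h t) (Ici x) x := by
  unfold tprim
  refine intervalIntegral.tendsto_integral_filter_of_dominated_convergence (fun _ => C) ?_ ?_ ?_ ?_
  · exact Eventually.of_forall fun y => (hh.meas_t y).aestronglyMeasurable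
  · exact Eventually.of_forall fun y => Eventually.of_forall fun s _ => hh.bdd s y
  · exact intervalIntegrable_const
  · exact Eventually.of_forall fun s _ => hh.rc s x

lemma tprim_deriv (hh : Nice C h) (t : ℝ) : ∀ᵐ x, HasDerivAt (fun s => tprim h s x) (h t x) t := by
  filter_upwards [hh.tc t] with x hx
  exact intervalIntegral.integral_hasDerivAt_right (hh.int_t x _ _)
    (hh.meas_t x).stronglyMeasurable.stronglyMeasurableAtFilter hx

end tp

lemma li_ii {f : ℝ → ℝ} (hi : LocallyIntegrable f) (a b : ℝ) : IntervalIntegrable f volume a b :=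
  ((hi.locallyIntegrableOn (uIcc a b)).integrableOn_isCompact isCompact_uIcc).intervalIntegrable

lemma cs_bound {φ : ℝ → ℝ} (hs : HasCompactSupport φ) :
    ∃ R : ℝ, 0 < R ∧ ∀ x, x ∉ Ioo (-R) R → φ x = 0 := by
  obtain ⟨R, hR, h⟩ := hs.exists_pos_le_norm
  refine ⟨R, hR, fun x hx => h x ?_⟩
  rw [Real.norm_eq_abs]
  by_contra hlt
  exact hx (abs_lt.1 (not_le.1 hlt))

lemma prim_cs {φ : ℝ → ℝ} (hφ : ContDiff ℝ (⊤ : ℕ∞) φ) (hs : HasCompactSupport φ)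
    (h0 : ∫ x, φ x = 0) :
    ∃ g : ℝ → ℝ, ContDiff ℝ (⊤ : ℕ∞) g ∧ HasCompactSupport g ∧ deriv g = φ := by
  obtain ⟨R, hR, hz⟩ := cs_bound hs
  have hd : ∀ x, HasDerivAt (fun x => ∫ y in (-R)..x, φ y) (φ x) x := fun x =>
    intervalIntegral.integral_hasDerivAt_right (hφ.continuous.intervalIntegrable _ _)
      hφ.continuous.stronglyMeasurable.stronglyMeasurableAtFilter hφ.continuous.continuousAt
  have hde : deriv (fun x => ∫ y in (-R)..x, φ y) = φ := funext fun x => (hd x).deriv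
  refine ⟨fun x => ∫ y in (-R)..x, φ y, ?_, ?_, hde⟩
  · rw [contDiff_infty_iff_deriv]
    exact ⟨fun x => (hd x).differentiableAt, by rw [hde]; exact hφ⟩
  · refine HasCompactSupport.intro (isCompact_Icc (a := -R) (b := R)) ?_
    intro x hx
    rcases lt_or_ge x (-R) with h | h
    · rw [intervalIntegral.integral_symm, neg_eq_zero]
      refine intervalIntegral.integral_zero_ae (Eventually.of_forall fun y hy => ?_)
      rw [uIoc_of_le h.le] at hy
      exact hz y (fun hh => absurd hh.1 (not_lt.2 hy.2))
    · have hx' : R < x := by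
        by_contra hc
        exact hx ⟨h, not_lt.1 hc⟩
      show ∫ y in (-R)..x, φ y = 0
      rw [intervalIntegral.integral_eq_integral_of_support_subset, h0]
      intro y hy
      have : y ∈ Ioo (-R) R := by
        by_contra hc
        exact hy (hz y hc)
      exact ⟨this.1, (this.2.trans hx').le⟩

lemma exists_rho : ∃ ρ : ℝ → ℝ, ContDiff ℝ (⊤ : ℕ∞) ρ ∧ HasCompactSupport ρ ∧ ∫ x, ρ x = 1 := by
  let b : ContDiffBump (0:ℝ) := ⟨1, 2, by norm_num, by norm_num⟩
  exact ⟨b.normed volume, b.contDiff_normed, b.hasCompactSupport_normed, b.integral_normed⟩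

lemma li_mul {Q g : ℝ → ℝ} (hQ : LocallyIntegrable Q) (hg : Continuous g)
    (hs : HasCompactSupport g) : Integrable (fun x => Q x * g x) := by
  have := hQ.integrable_smul_left_of_hasCompactSupport hg hs
  simpa [mul_comm] using this

/-- integration by parts against a compactly supported test function -/
lemma ibp0 {g u u' : ℝ → ℝ} (hg : ContDiff ℝ (⊤ : ℕ∞) g) (hs : HasCompactSupport g)
    (hu : Continuous u) (hd : ∀ x, HasDerivWithinAt u (u' x) (Ioi x) x)
    (hi : LocallyIntegrable u') :
    ∫ x, u' x * g x = - ∫ x, u x * deriv g x := by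
  obtain ⟨R, hR, hz⟩ := cs_bound hs
  obtain ⟨R', hR', hz'⟩ := cs_bound hs.deriv
  set S := max R R'
  have hS : R ≤ S := le_max_left _ _
  have hS' : R' ≤ S := le_max_right _ _
  have e1 : ∫ x, g x * u' x = ∫ x in (-S)..S, g x * u' x := by
    symm
    apply intervalIntegral.integral_eq_integral_of_support_subset
    intro y hy
    have : y ∈ Ioo (-R) R := by
      by_contra hc
      exact hy (by simp [hz y hc])
    exact ⟨by linarith [this.1], by linarith [this.2]⟩
  have e2 : ∫ x, deriv g x * u x = ∫ x in (-S)..S, deriv g x * u x := by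
    symm
    apply intervalIntegral.integral_eq_integral_of_support_subset
    intro y hy
    have : y ∈ Ioo (-R') R' := by
      by_contra hc
      exact hy (by simp [hz' y hc])
    exact ⟨by linarith [this.1], by linarith [this.2]⟩
  have hgd : ∀ x, HasDerivAt g (deriv g x) x := fun x =>
    (hg.differentiable (by simp) x).hasDerivAt
  have hgc : Continuous (deriv g) := hg.continuous_deriv (by simp)
  have := intervalIntegral.integral_mul_deriv_eq_deriv_mul_of_hasDeriv_right (a := -S) (b := S)
    hg.continuous.continuousOn hu.continuousOn (fun x _ => (hgd x).hasDerivWithinAt)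
    (fun x _ => hd x) (hgc.intervalIntegrable _ _) (li_ii hi _ _)
  simp_rw [mul_comm (u' _), mul_comm (u _)]
  rw [e1, e2, this, hz S (fun h => absurd h.2 (not_lt.2 hS)),
    hz (-S) (fun h => absurd h.1 (by linarith))]
  simp

lemma dbr1 {Q : ℝ → ℝ} (hQ : LocallyIntegrable Q)
    (h : ∀ g : ℝ → ℝ, ContDiff ℝ (⊤ : ℕ∞) g → HasCompactSupport g → ∫ x, Q x * deriv g x = 0) :
    ∃ d : ℝ, ∀ᵐ x, Q x = d := by
  obtain ⟨ρ, hρ, hρs, hρ1⟩ := exists_rho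
  refine ⟨∫ x, Q x * ρ x, ?_⟩
  have := ae_eq_zero_of_integral_contDiff_smul_eq_zero
    (f := fun x => Q x - ∫ x, Q x * ρ x) (μ := volume)
    (hQ.sub (locallyIntegrable_const _)) ?_
  · filter_upwards [this] with x hx
    linarith
  intro φ hφ hφs
  have iφ : Integrable φ := hφ.continuous.integrable_of_hasCompactSupport hφs
  have iρ : Integrable ρ := hρ.continuous.integrable_of_hasCompactSupport hρs
  obtain ⟨g, hg, hgs, hgd⟩ := prim_cs (φ := fun x => φ x - (∫ y, φ y) * ρ x)
    (hφ.sub (contDiff_const.mul hρ)) (hφs.sub hρs.mul_left) (by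
      rw [integral_sub iφ (iρ.const_mul _), integral_const_mul, hρ1]; ring)
  have h1 := h g hg hgs
  rw [hgd] at h1
  have iQφ := li_mul hQ hφ.continuous hφs
  have iQρ := li_mul hQ hρ.continuous hρs
  have e : ∀ x, Q x * (φ x - (∫ y, φ y) * ρ x) = Q x * φ x - (∫ y, φ y) * (Q x * ρ x) := by
    intro x; ring
  simp_rw [e] at h1
  rw [integral_sub iQφ (iQρ.const_mul _), integral_const_mul] at h1
  have e2 : ∀ x, φ x • (Q x - ∫ x, Q x * ρ x) = Q x * φ x - φ x * (∫ x, Q x * ρ x) := by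
    intro x; simp only [smul_eq_mul]; ring
  simp_rw [e2]
  rw [integral_sub iQφ (iφ.mul_const _), integral_mul_const]
  exact h1

lemma dbr2 {Q : ℝ → ℝ} (hQ : LocallyIntegrable Q)
    (h : ∀ g : ℝ → ℝ, ContDiff ℝ (⊤ : ℕ∞) g → HasCompactSupport g →
      ∫ x, Q x * deriv (deriv g) x = 0) :
    ∃ c d : ℝ, ∀ᵐ x, Q x = c * x + d := by
  obtain ⟨ρ, hρ, hρs, hρ1⟩ := exists_rho
  have hdc : ∀ {φ : ℝ → ℝ}, ContDiff ℝ (⊤ : ℕ∞) φ → ContDiff ℝ (⊤ : ℕ∞) (deriv φ) := by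
    intro φ hφ
    exact (contDiff_infty_iff_deriv.1 hφ).2
  set c := ∫ x, Q x * deriv ρ x with hc
  have hlc : LocallyIntegrable (fun x : ℝ => c * x) :=
    (continuous_const.mul continuous_id).locallyIntegrable
  obtain ⟨d, hd⟩ := dbr1 (Q := fun x => Q x + c * x) (hQ.add hlc) (by
    intro φ hφ hφs
    have iφ : Integrable φ := hφ.continuous.integrable_of_hasCompactSupport hφs
    have iρ : Integrable ρ := hρ.continuous.integrable_of_hasCompactSupport hρs
    obtain ⟨g, hg, hgs, hgd⟩ := prim_cs (φ := fun x => φ x - (∫ y, φ y) * ρ x)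
      (hφ.sub (contDiff_const.mul hρ)) (hφs.sub hρs.mul_left) (by
        rw [integral_sub iφ (iρ.const_mul _), integral_const_mul, hρ1]; ring)
    have h1 := h g hg hgs
    have hd2 : deriv (deriv g) = fun x => deriv φ x - (∫ y, φ y) * deriv ρ x := by
      rw [hgd]
      funext x
      have a1 : HasDerivAt φ (deriv φ x) x := (hφ.differentiable (by simp) x).hasDerivAt
      have a2 : HasDerivAt ρ (deriv ρ x) x := (hρ.differentiable (by simp) x).hasDerivAt
      exact (a1.sub (a2.const_mul _)).deriv
    rw [hd2] at h1
    have iQφ := li_mul hQ (hdc hφ).continuous hφs.deriv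
    have iQρ := li_mul hQ (hdc hρ).continuous hρs.deriv
    have e : ∀ x, Q x * (deriv φ x - (∫ y, φ y) * deriv ρ x)
        = Q x * deriv φ x - (∫ y, φ y) * (Q x * deriv ρ x) := by
      intro x; ring
    simp_rw [e] at h1
    rw [integral_sub iQφ (iQρ.const_mul _), integral_const_mul] at h1
    have h2 := ibp0 (g := φ) (u := fun x => c * x) (u' := fun _ => c) hφ hφs (by fun_prop)
      (fun x => by simpa using ((hasDerivAt_id x).const_mul c).hasDerivWithinAt)
      (locallyIntegrable_const _)
    rw [integral_const_mul] at h2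
    simp_rw [add_mul]
    rw [integral_add iQφ (li_mul hlc (hdc hφ).continuous hφs.deriv)]
    linarith)
  refine ⟨-c, d, ?_⟩
  filter_upwards [hd] with x hx
  linarith

lemma eq_of_ae_rc {u v : ℝ → ℝ} (hu : ∀ x, ContinuousWithinAt u (Ici x) x)
    (hv : ∀ x, ContinuousWithinAt v (Ici x) x) (h : ∀ᵐ x, u x = v x) : u = v := by
  funext x
  have h1 : Tendsto u (𝓝[>] x) (𝓝 (u x)) := ((hu x).mono Ioi_subset_Ici_self).tendsto
  have h2 : Tendsto v (𝓝[>] x) (𝓝 (v x)) := ((hv x).mono Ioi_subset_Ici_self).tendsto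
  have h3 : ∃ᶠ y in 𝓝[>] x, u y = v y := by
    intro hc
    obtain ⟨z, hz, hzs⟩ := mem_nhdsGT_iff_exists_Ioo_subset.1 hc
    have hz : x < z := hz
    have : volume (Ioo x z) = 0 := measure_mono_null hzs h
    simp at this
    linarith
  have h4 : Tendsto (fun y => u y - v y) (𝓝[>] x) (𝓝 (u x - v x)) := h1.sub h2
  by_contra hne
  have h5 : ∀ᶠ y in 𝓝[>] x, u y - v y ≠ 0 := h4.eventually_ne (sub_ne_zero.2 hne)
  exact h3 (h5.mono fun y hy he => hy (sub_eq_zero.2 he))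

lemma li_of_bdd {f : ℝ → ℝ} {C : ℝ} (hm : Measurable f) (hb : ∀ x, |f x| ≤ C) :
    LocallyIntegrable f :=
  (locallyIntegrable_const C).mono hm.aestronglyMeasurable
    (Eventually.of_forall fun x => (hb x).trans (le_abs_self C))

lemma prim_rderiv {f : ℝ → ℝ} (hm : Measurable f) (hi : LocallyIntegrable f)
    (hrc : ∀ x, ContinuousWithinAt f (Ici x) x) (x : ℝ) :
    HasDerivWithinAt (fun x => ∫ y in (0:ℝ)..x, f y) (f x) (Ioi x) x := by
  exact (intervalIntegral.integral_hasDerivWithinAt_right (li_ii hi _ _)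
    (s := Ici x) (t := Ioi x) hm.stronglyMeasurable.stronglyMeasurableAtFilter
    ((hrc x).mono Ioi_subset_Ici_self)).mono Ioi_subset_Ici_self

/-- From the weak formulation at a fixed time to a pointwise one. -/
lemma weak_to_strong {f K B : ℝ → ℝ} {Cf CK CB : ℝ}
    (mf : Measurable f) (mK : Measurable K) (mB : Measurable B)
    (bf : ∀ x, |f x| ≤ Cf) (bK : ∀ x, |K x| ≤ CK) (bB : ∀ x, |B x| ≤ CB)
    (rf : ∀ x, ContinuousWithinAt f (Ici x) x) (rK : ∀ x, ContinuousWithinAt K (Ici x) x)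
    (rB : ∀ x, ContinuousWithinAt B (Ici x) x)
    (h : ∀ g : ℝ → ℝ, ContDiff ℝ (⊤ : ℕ∞) g → HasCompactSupport g →
      ∫ x, f x * g x = ∫ x, (K x * deriv (deriv g) x + B x * deriv g x)) :
    ∃ w : ℝ → ℝ, Continuous w ∧ Continuous K ∧ (∀ x, HasDerivWithinAt w (f x) (Ioi x) x) ∧
      ∀ x, HasDerivWithinAt K (w x + B x) (Ioi x) x := by
  have lf := li_of_bdd mf bf
  have lK := li_of_bdd mK bK
  have lB := li_of_bdd mB bB
  set U : ℝ → ℝ := fun x => ∫ y in (0:ℝ)..x, f y with hU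
  have cU : Continuous U :=
    intervalIntegral.continuous_primitive (fun a b => li_ii lf a b) 0
  have dU := prim_rderiv mf lf rf
  have lUB : LocallyIntegrable (fun x => U x + B x) := cU.locallyIntegrable.add lB
  have mUB : Measurable (fun x => U x + B x) := cU.measurable.add mB
  have rUB : ∀ x, ContinuousWithinAt (fun x => U x + B x) (Ici x) x := fun x =>
    cU.continuousWithinAt.add (rB x)
  set V : ℝ → ℝ := fun x => ∫ y in (0:ℝ)..x, (U y + B y) with hV
  have cV : Continuous V :=
    intervalIntegral.continuous_primitive (fun a b => li_ii lUB a b) 0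
  have dV := prim_rderiv mUB lUB rUB
  obtain ⟨c, d, hcd⟩ := dbr2 (Q := fun x => K x - V x) (lK.sub cV.locallyIntegrable) (by
    intro g hg hgs
    have hg1 : ContDiff ℝ (⊤ : ℕ∞) (deriv g) := (contDiff_infty_iff_deriv.1 hg).2
    have hg2 : ContDiff ℝ (⊤ : ℕ∞) (deriv (deriv g)) := (contDiff_infty_iff_deriv.1 hg1).2
    have h1 := h g hg hgs
    have h2 := ibp0 hg hgs cU dU lf
    have h3 := ibp0 hg1 hgs.deriv cV dV lUB
    have iK := li_mul lK hg2.continuous hgs.deriv.deriv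
    have iV := li_mul cV.locallyIntegrable hg2.continuous hgs.deriv.deriv
    have iB := li_mul lB hg1.continuous hgs.deriv
    have iU := li_mul cU.locallyIntegrable hg1.continuous hgs.deriv
    rw [integral_add iK iB] at h1
    simp_rw [add_mul] at h3
    rw [integral_add iU iB] at h3
    simp_rw [sub_mul]
    rw [integral_sub iK iV]
    linarith)
  have hK : K = fun x => V x + (c * x + d) := by
    refine eq_of_ae_rc rK (fun x => Continuous.continuousWithinAt (by fun_prop)) ?_
    filter_upwards [hcd] with x hx
    linarith
  refine ⟨fun x => U x + c, by fun_prop, by rw [hK]; fun_prop, fun x => (dU x).add_const c, ?_⟩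
  intro x
  rw [hK]
  have := (dV x).add ((((hasDerivAt_id x).const_mul c).add_const d).hasDerivWithinAt (s := Ioi x))
  refine this.congr_deriv ?_
  simp; ring

/-- weight function -/
def wt (κ x : ℝ) : ℝ := (1 + (κ * x) ^ 2)⁻¹
/-- derivative of the weight function -/
def wt' (κ x : ℝ) : ℝ := -(2 * κ ^ 2 * x) / (1 + (κ * x) ^ 2) ^ 2

lemma wt_pos (κ x : ℝ) : 0 < wt κ x := by unfold wt; positivity

lemma wt_cont (κ : ℝ) : Continuous (wt κ) := by
  unfold wt
  exact Continuous.inv₀ (by fun_prop) (fun x => by positivity)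

lemma wt'_cont (κ : ℝ) : Continuous (wt' κ) := by
  unfold wt'
  exact Continuous.div (by fun_prop) (by fun_prop) (fun x => by positivity)

lemma wt_int {κ : ℝ} (hκ : 0 < κ) : Integrable (wt κ) :=
  integrable_inv_one_add_sq.comp_mul_left' hκ.ne'

lemma wt_deriv (κ x : ℝ) : HasDerivAt (wt κ) (wt' κ x) x := by
  have h : HasDerivAt (fun x : ℝ => 1 + (κ * x) ^ 2) (2 * κ ^ 2 * x) x := by
    have := (((hasDerivAt_id x).const_mul κ).pow 2).const_add 1
    refine this.congr_deriv ?_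
    simp; ring
  exact h.inv (by positivity)

lemma wt'_le {κ : ℝ} (hκ : 0 < κ) (x : ℝ) : |wt' κ x| ≤ κ * wt κ x := by
  unfold wt' wt
  have hp : 0 < 1 + (κ * x) ^ 2 := by positivity
  rw [abs_div, abs_of_pos (by positivity : 0 < (1 + (κ * x) ^ 2) ^ 2), div_le_iff₀ (by positivity)]
  have : κ * (1 + (κ * x) ^ 2)⁻¹ * (1 + (κ * x) ^ 2) ^ 2 = κ * (1 + (κ * x) ^ 2) := by
    field_simp
  rw [this, abs_neg, abs_mul, abs_of_pos (by positivity : 0 < 2 * κ ^ 2)]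
  have : κ * (1 + (κ * x) ^ 2) - 2 * κ ^ 2 * |x| = κ * (1 - κ * |x|) ^ 2 := by
    have := sq_abs x
    ring_nf; rw [this]
  nlinarith [mul_nonneg hκ.le (sq_nonneg (1 - κ * |x|))]

lemma wt_tendsto {κ : ℝ} (hκ : 0 < κ) : Tendsto (wt κ) (cocompact ℝ) (𝓝 0) := by
  have h1 : Tendsto (fun x : ℝ => 1 + κ ^ 2 * ‖x‖ ^ 2) (cocompact ℝ) atTop := by
    refine tendsto_atTop_add_const_left _ _ (Tendsto.const_mul_atTop (by positivity) ?_)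
    exact (tendsto_pow_atTop (by norm_num)).comp tendsto_norm_cocompact_atTop
  refine (tendsto_inv_atTop_zero.comp h1).congr fun x => ?_
  simp [wt, mul_pow]

/-- integration by parts on the line, right derivatives -/
lemma ibp1 {φ φ' K K' : ℝ → ℝ} {C D : ℝ} (cφ : Continuous φ) (cK : Continuous K)
    (dφ : ∀ x, HasDerivWithinAt φ (φ' x) (Ioi x) x)
    (dK : ∀ x, HasDerivWithinAt K (K' x) (Ioi x) x)
    (iφ : Integrable φ) (iφ' : Integrable φ') (mK' : Measurable K')
    (bK : ∀ x, |K x| ≤ C) (bK' : ∀ x, |K' x| ≤ D)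
    (l : Tendsto φ (cocompact ℝ) (𝓝 0)) :
    ∫ x, φ x * K' x = - ∫ x, φ' x * K x := by
  have i1 : Integrable (fun x => φ x * K' x) :=
    iφ.mul_bdd (c := D) mK'.aestronglyMeasurable (Eventually.of_forall bK')
  have i2 : Integrable (fun x => φ' x * K x) :=
    iφ'.mul_bdd (c := C) cK.aestronglyMeasurable (Eventually.of_forall bK)
  have lp : Tendsto (fun n : ℕ => (n:ℝ)) atTop atTop := tendsto_natCast_atTop_atTop
  have ln : Tendsto (fun n : ℕ => -(n:ℝ)) atTop atBot := tendsto_neg_atTop_atBot.comp lp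
  have t1 := intervalIntegral_tendsto_integral i1 ln lp
  have t2 := intervalIntegral_tendsto_integral i2 ln lp
  have lφK : Tendsto (fun x => φ x * K x) (cocompact ℝ) (𝓝 0) := by
    refine squeeze_zero_norm (a := fun x => |φ x| * C) (fun x => ?_) ?_
    · rw [norm_mul]
      exact mul_le_mul_of_nonneg_left (bK x) (abs_nonneg _)
    · simpa using l.abs.mul_const C
  have b1 : Tendsto (fun n : ℕ => φ n * K n) atTop (𝓝 0) :=
    (lφK.mono_left atTop_le_cocompact).comp lp
  have b2 : Tendsto (fun n : ℕ => φ (-n) * K (-n)) atTop (𝓝 0) :=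
    (lφK.mono_left atBot_le_cocompact).comp ln
  have t3 := (b1.sub b2).sub t2
  have : ∀ n : ℕ, ∫ x in (-(n:ℝ))..n, φ x * K' x
      = φ n * K n - φ (-n) * K (-n) - ∫ x in (-(n:ℝ))..n, φ' x * K x := by
    intro n
    exact intervalIntegral.integral_mul_deriv_eq_deriv_mul_of_hasDeriv_right
      cφ.continuousOn cK.continuousOn (fun x _ => dφ x) (fun x _ => dK x)
      iφ'.intervalIntegrable (li_ii (li_of_bdd mK' bK') _ _)
  simp_rw [this] at t1
  have := tendsto_nhds_unique t1 t3
  simpa using this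

/-- The data of the linearised-looking system satisfied by the difference of two solutions. -/
structure Sys (t1 Cf Ca Cb : ℝ) (f α β w : ℝ → ℝ → ℝ) : Prop where
  nf : Nice Cf f
  na : Nice Ca α
  nb : Nice Cb β
  ht1 : 0 ≤ t1
  cw : ∀ t ∈ Icc 0 t1, Continuous (w t)
  cK : ∀ t ∈ Icc 0 t1, Continuous (tprim α t)
  dw : ∀ t ∈ Icc 0 t1, ∀ x, HasDerivWithinAt (w t) (f t x) (Ioi x) x
  dK : ∀ t ∈ Icc 0 t1, ∀ x, HasDerivWithinAt (tprim α t) (w t x + tprim β t x) (Ioi x) x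
  mono : ∀ t x, 0 ≤ f t x * α t x
  ctrl : ∀ δ > 0, ∃ M : ℝ, ∀ t x, |β t x| ≤ δ + M * (f t x * α t x)

namespace Sys
variable {t1 Cf Ca Cb : ℝ} {f α β w : ℝ → ℝ → ℝ}

lemma tprim_neg (h : ℝ → ℝ → ℝ) (t : ℝ) : tprim (fun t x => - h t x) t = fun x => - tprim h t x := by
  funext x; simp [tprim]

lemma neg (S : Sys t1 Cf Ca Cb f α β w) :
    Sys t1 Cf Ca Cb (fun t x => - f t x) (fun t x => - α t x) (fun t x => - β t x)
      (fun t x => - w t x) where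
  nf := S.nf.neg
  na := S.na.neg
  nb := S.nb.neg
  ht1 := S.ht1
  cw t ht := (S.cw t ht).neg
  cK t ht := by rw [tprim_neg]; exact (S.cK t ht).neg
  dw t ht x := (S.dw t ht x).neg
  dK t ht x := by
    rw [tprim_neg, tprim_neg]
    exact ((S.dK t ht x).neg).congr_deriv (by ring)
  mono t x := by have := S.mono t x; simpa using this
  ctrl δ hδ := by
    obtain ⟨M, hM⟩ := S.ctrl δ hδ
    exact ⟨M, fun t x => by simpa using hM t x⟩

lemma ftc (S : Sys t1 Cf Ca Cb f α β w) {t : ℝ} (ht : t ∈ Icc 0 t1) (x y : ℝ) :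
    ∫ z in x..y, f t z = w t y - w t x :=
  intervalIntegral.integral_eq_sub_of_hasDeriv_right (S.cw t ht).continuousOn
    (fun z _ => S.dw t ht z) (li_ii (li_of_bdd (S.nf.meas_x t) (S.nf.bdd t)) _ _)

lemma lip (S : Sys t1 Cf Ca Cb f α β w) {t : ℝ} (ht : t ∈ Icc 0 t1) (x y : ℝ) :
    |w t y - w t x| ≤ Cf * |y - x| := by
  rw [← S.ftc ht]
  exact intervalIntegral.norm_integral_le_of_norm_le_const (f := f t) (fun z _ => S.nf.bdd t z)

lemma w_zero (S : Sys t1 Cf Ca Cb f α β w) (x : ℝ) : w 0 x = 0 := by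
  have h := S.dK 0 ⟨le_rfl, S.ht1⟩ x
  have e : tprim α 0 = fun _ => 0 := funext fun y => tprim_zero y
  rw [e, tprim_zero, add_zero] at h
  exact (uniqueDiffWithinAt_Ioi x).eq_deriv _ h (hasDerivWithinAt_const _ _ _)

lemma tdiff (S : Sys t1 Cf Ca Cb f α β w) {s t : ℝ} (hs : s ∈ Icc 0 t1) (ht : t ∈ Icc 0 t1)
    {h : ℝ} (hh : 0 < h) (x : ℝ) :
    |w t x - w s x| ≤ 2 * Cf * h + (2 * Ca / h + Cb) * |t - s| := by
  set D : ℝ → ℝ := fun y => w t y - w s y with hD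
  have cD : Continuous D := (S.cw t ht).sub (S.cw s hs)
  set E : ℝ → ℝ := fun y => tprim β t y - tprim β s y with hE
  have mE : Measurable E := (tprim_meas S.nb t).sub (tprim_meas S.nb s)
  have bE : ∀ y, |E y| ≤ Cb * |t - s| := tprim_lip S.nb s t
  have iE : IntervalIntegrable E volume x (x + h) := li_ii (li_of_bdd mE bE) _ _
  have iD : IntervalIntegrable D volume x (x + h) := cD.intervalIntegrable _ _
  have e1 : ∫ y in x..(x+h), (D y + E y) = (tprim α t (x+h) - tprim α s (x+h))
      - (tprim α t x - tprim α s x) := by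
    refine intervalIntegral.integral_eq_sub_of_hasDeriv_right
      (f := fun y => tprim α t y - tprim α s y)
      ((S.cK t ht).sub (S.cK s hs)).continuousOn (fun z _ => ?_) (iD.add iE)
    refine ((S.dK t ht z).sub (S.dK s hs z)).congr_deriv ?_
    simp only [hD, hE]; ring
  rw [intervalIntegral.integral_add iD iE] at e1
  have e2 : |∫ y in x..(x+h), (D y - D x)| ≤ (2 * Cf * h) * |x + h - x| := by
    refine intervalIntegral.norm_integral_le_of_norm_le_const (f := fun y => D y - D x)
      (fun y hy => ?_)
    rw [uIoc_of_le (by linarith)] at hy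
    have hyx : |y - x| ≤ h := by rw [abs_of_pos (by linarith [hy.1])]; linarith [hy.2]
    have a1 := S.lip ht x y
    have a2 := S.lip hs x y
    have hc := S.nf.C_nonneg
    have a3 : Cf * |y - x| ≤ Cf * h := mul_le_mul_of_nonneg_left hyx hc
    rw [Real.norm_eq_abs]
    have e : D y - D x = (w t y - w t x) - (w s y - w s x) := by simp only [hD]; ring
    rw [e]
    refine (abs_sub _ _).trans ?_
    linarith
  rw [intervalIntegral.integral_sub iD intervalIntegrable_const] at e2
  simp only [intervalIntegral.integral_const, add_sub_cancel_left, smul_eq_mul, abs_of_pos hh] at e2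
  have e3 : |∫ y in x..(x+h), E y| ≤ (Cb * |t - s|) * |x + h - x| :=
    intervalIntegral.norm_integral_le_of_norm_le_const (f := E) (fun y _ => bE y)
  simp only [add_sub_cancel_left, abs_of_pos hh] at e3
  have k1 := tprim_lip S.na s t (x+h)
  have k2 := tprim_lip S.na s t x
  rw [abs_le] at e2 e3 k1 k2
  have r : 2 * Cf * h + (2 * Ca / h + Cb) * |t - s|
      = ((2 * Cf * h) * h + 2 * (Ca * |t - s|) + (Cb * |t - s|) * h) / h := by
    field_simp
    ring
  rw [r, le_div_iff₀ hh, ← abs_of_pos hh, ← abs_mul, abs_of_pos hh, abs_le]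
  change _ ≤ D x * h ∧ D x * h ≤ _
  constructor <;> nlinarith

/-- uniform bound on `w` -/
def bd (t1 Cf Ca Cb : ℝ) : ℝ := 2 * Cf + (2 * Ca + Cb) * t1

lemma bound (S : Sys t1 Cf Ca Cb f α β w) {t : ℝ} (ht : t ∈ Icc 0 t1) (x : ℝ) :
    |w t x| ≤ bd t1 Cf Ca Cb := by
  have := S.tdiff ⟨le_rfl, S.ht1⟩ ht one_pos x
  rw [S.w_zero] at this
  simp only [sub_zero, mul_one, div_one] at this
  rw [abs_of_nonneg ht.1] at this
  have hc : 0 ≤ 2 * Ca + Cb := by linarith [S.na.C_nonneg, S.nb.C_nonneg]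
  have := mul_le_mul_of_nonneg_left ht.2 hc
  unfold bd
  linarith

lemma tcont (S : Sys t1 Cf Ca Cb f α β w) (x : ℝ) : ContinuousOn (fun t => w t x) (Icc 0 t1) := by
  intro s hs
  rw [Metric.continuousWithinAt_iff]
  intro ε hε
  have hc := S.nf.C_nonneg
  have ha := S.na.C_nonneg
  have hb := S.nb.C_nonneg
  set h := ε / (4 * (Cf + 1)) with hh
  have hp : 0 < h := by positivity
  have h1 : 2 * Cf * h < ε / 2 + ε / 8 := by
    have : Cf * h ≤ ε / 4 := by
      rw [hh, mul_div_assoc', div_le_iff₀ (by positivity)]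
      nlinarith
    linarith
  set L := 2 * Ca / h + Cb + 1
  have hL : 0 < L := by positivity
  refine ⟨ε / (4 * L), by positivity, fun {t} ht hd => ?_⟩
  rw [Real.dist_eq] at hd ⊢
  refine (S.tdiff hs ht hp x).trans_lt ?_
  have : L * |t - s| < ε / 4 := by
    rw [lt_div_iff₀ (by positivity)] at hd
    nlinarith
  have h3 : (2 * Ca / h + Cb) * |t - s| ≤ L * |t - s| :=
    mul_le_mul_of_nonneg_right (by linarith) (abs_nonneg _)
  linarith

/-- the weighted exponential energy -/
def en (κ l : ℝ) (w : ℝ → ℝ → ℝ) (t : ℝ) : ℝ := ∫ x, wt κ x * Real.exp (l * w t x)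

lemma exp_le (S : Sys t1 Cf Ca Cb f α β w) {l : ℝ} (hl : 0 ≤ l) {t : ℝ} (ht : t ∈ Icc 0 t1)
    (x : ℝ) : Real.exp (l * w t x) ≤ Real.exp (l * bd t1 Cf Ca Cb) :=
  Real.exp_le_exp.2 (mul_le_mul_of_nonneg_left ((le_abs_self _).trans (S.bound ht x)) hl)

lemma en_bd (S : Sys t1 Cf Ca Cb f α β w) (κ : ℝ) {l : ℝ} (hl : 0 ≤ l) {t : ℝ}
    (ht : t ∈ Icc 0 t1) (x : ℝ) :
    ‖wt κ x * Real.exp (l * w t x)‖ ≤ wt κ x * Real.exp (l * bd t1 Cf Ca Cb) := by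
  rw [Real.norm_eq_abs, abs_of_pos (mul_pos (wt_pos κ x) (Real.exp_pos _))]
  exact mul_le_mul_of_nonneg_left (S.exp_le hl ht x) (wt_pos κ x).le

lemma en_cont_x (S : Sys t1 Cf Ca Cb f α β w) (κ l : ℝ) {t : ℝ}
    (ht : t ∈ Icc 0 t1) : Continuous (fun x => wt κ x * Real.exp (l * w t x)) :=
  (wt_cont κ).mul (Real.continuous_exp.comp (continuous_const.mul (S.cw t ht)))

lemma en_int (S : Sys t1 Cf Ca Cb f α β w) {κ l : ℝ} (hκ : 0 < κ) (hl : 0 ≤ l) {t : ℝ}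
    (ht : t ∈ Icc 0 t1) : Integrable (fun x => wt κ x * Real.exp (l * w t x)) :=
  ((wt_int hκ).mul_const _).mono' (S.en_cont_x κ l ht).aestronglyMeasurable
    (Eventually.of_forall (S.en_bd κ hl ht))

lemma en_cont (S : Sys t1 Cf Ca Cb f α β w) {κ l : ℝ} (hκ : 0 < κ) (hl : 0 ≤ l) :
    ContinuousOn (en κ l w) (Icc 0 t1) := by
  intro s hs
  refine tendsto_integral_filter_of_dominated_convergence
    (fun x => wt κ x * Real.exp (l * bd t1 Cf Ca Cb)) ?_ ?_ ((wt_int hκ).mul_const _) ?_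
  · filter_upwards [self_mem_nhdsWithin] with t ht
    exact (S.en_cont_x κ l ht).aestronglyMeasurable
  · filter_upwards [self_mem_nhdsWithin] with t ht
    exact Eventually.of_forall (S.en_bd κ hl ht)
  · refine Eventually.of_forall fun x => ?_
    exact tendsto_const_nhds.mul ((Real.continuous_exp.tendsto _).comp
      ((S.tcont x s hs).tendsto.const_mul l))

/-- spatial derivative of `wt * exp (l w)` -/
def dphi (κ l : ℝ) (f w : ℝ → ℝ → ℝ) (t x : ℝ) : ℝ :=
  Real.exp (l * w t x) * (wt' κ x + l * (wt κ x * f t x))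

lemma dphi_deriv (S : Sys t1 Cf Ca Cb f α β w) (κ l : ℝ) {t : ℝ}
    (ht : t ∈ Icc 0 t1) (x : ℝ) :
    HasDerivWithinAt (fun x => wt κ x * Real.exp (l * w t x)) (dphi κ l f w t x) (Ioi x) x := by
  refine (((wt_deriv κ x).hasDerivWithinAt).mul
    (((S.dw t ht x).const_mul l).exp)).congr_deriv ?_
  unfold dphi; ring

lemma dphi_meas (S : Sys t1 Cf Ca Cb f α β w) (κ l : ℝ) {t : ℝ}
    (ht : t ∈ Icc 0 t1) : Measurable (dphi κ l f w t) := by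
  unfold dphi
  have h1 := (S.cw t ht).measurable
  have h2 := S.nf.meas_x t
  have h3 := (wt_cont κ).measurable
  have h4 := (wt'_cont κ).measurable
  fun_prop

lemma dphi_bd (S : Sys t1 Cf Ca Cb f α β w) {κ l : ℝ} (hκ : 0 < κ) (hl : 0 ≤ l) {t : ℝ}
    (ht : t ∈ Icc 0 t1) (x : ℝ) :
    |dphi κ l f w t x| ≤ wt κ x * (Real.exp (l * bd t1 Cf Ca Cb) * (κ + l * Cf)) := by
  unfold dphi
  rw [abs_mul, abs_of_pos (Real.exp_pos _)]
  have h1 := S.exp_le hl ht x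
  have hw := wt_pos κ x
  have h2 : |wt' κ x + l * (wt κ x * f t x)| ≤ wt κ x * (κ + l * Cf) := by
    refine (abs_add_le _ _).trans ?_
    rw [abs_mul, abs_mul, abs_of_pos hw, abs_of_nonneg hl]
    have := wt'_le hκ x
    have h3 : l * (wt κ x * |f t x|) ≤ l * (wt κ x * Cf) :=
      mul_le_mul_of_nonneg_left (mul_le_mul_of_nonneg_left (S.nf.bdd t x) hw.le) hl
    linarith
  calc _ ≤ Real.exp (l * bd t1 Cf Ca Cb) * (wt κ x * (κ + l * Cf)) :=
        mul_le_mul h1 h2 (abs_nonneg _) (Real.exp_pos _).le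
    _ = _ := by ring

lemma dphi_int (S : Sys t1 Cf Ca Cb f α β w) {κ l : ℝ} (hκ : 0 < κ) (hl : 0 ≤ l) {t : ℝ}
    (ht : t ∈ Icc 0 t1) : Integrable (dphi κ l f w t) :=
  ((wt_int hκ).mul_const _).mono' (S.dphi_meas κ l ht).aestronglyMeasurable
    (Eventually.of_forall (S.dphi_bd hκ hl ht))

lemma ibp (S : Sys t1 Cf Ca Cb f α β w) {κ l : ℝ} (hκ : 0 < κ) (hl : 0 ≤ l) {s t : ℝ}
    (hs : s ∈ Icc 0 t1) (ht : t ∈ Icc 0 t1) :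
    ∫ x, wt κ x * Real.exp (l * w t x) * (w t x - w s x) =
      ∫ x, -(dphi κ l f w t x * (tprim α t x - tprim α s x)
        + wt κ x * Real.exp (l * w t x) * (tprim β t x - tprim β s x)) := by
  have mE : Measurable (fun x => tprim β t x - tprim β s x) :=
    (tprim_meas S.nb t).sub (tprim_meas S.nb s)
  have bE : ∀ y, |tprim β t y - tprim β s y| ≤ Cb * |t - s| := tprim_lip S.nb s t
  have bD : ∀ y, |w t y - w s y| ≤ 2 * bd t1 Cf Ca Cb := fun y => by
    refine (abs_sub _ _).trans ?_
    linarith [S.bound hs y, S.bound ht y]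
  have iφ := S.en_int hκ hl ht
  have iφ' := S.dphi_int hκ hl ht
  have cD : Continuous (fun x => w t x - w s x) := (S.cw t ht).sub (S.cw s hs)
  have cK : Continuous (fun x => tprim α t x - tprim α s x) := (S.cK t ht).sub (S.cK s hs)
  have key := ibp1 (φ := fun x => wt κ x * Real.exp (l * w t x)) (φ' := dphi κ l f w t)
    (K := fun x => tprim α t x - tprim α s x)
    (K' := fun x => (w t x - w s x) + (tprim β t x - tprim β s x))
    (C := Ca * |t - s|) (D := 2 * bd t1 Cf Ca Cb + Cb * |t - s|)
    (S.en_cont_x κ l ht) cK (S.dphi_deriv κ l ht)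
    (fun x => ((S.dK t ht x).sub (S.dK s hs x)).congr_deriv (by ring))
    iφ iφ' (cD.measurable.add mE) (tprim_lip S.na s t)
    (fun x => (abs_add_le _ _).trans (add_le_add (bD x) (bE x))) (by
      refine squeeze_zero_norm (S.en_bd κ hl ht) ?_
      simpa using (wt_tendsto hκ).mul_const _)
  have i1 : Integrable (fun x => wt κ x * Real.exp (l * w t x) * (w t x - w s x)) :=
    iφ.mul_bdd cD.aestronglyMeasurable (Eventually.of_forall bD)
  have i2 : Integrable (fun x => wt κ x * Real.exp (l * w t x) * (tprim β t x - tprim β s x)) :=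
    iφ.mul_bdd mE.aestronglyMeasurable (Eventually.of_forall bE)
  have i3 : Integrable (fun x => dphi κ l f w t x * (tprim α t x - tprim α s x)) :=
    iφ'.mul_bdd cK.aestronglyMeasurable (Eventually.of_forall (tprim_lip S.na s t))
  simp_rw [mul_add] at key
  rw [integral_add i1 i2] at key
  rw [integral_neg, integral_add i3 i2]
  linarith

lemma en_diff (S : Sys t1 Cf Ca Cb f α β w) {κ l : ℝ} (hκ : 0 < κ) (hl : 0 ≤ l) {s t : ℝ}
    (hs : s ∈ Icc 0 t1) (ht : t ∈ Icc 0 t1) :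
    en κ l w t - en κ l w s ≤ l *
      ∫ x, -(dphi κ l f w t x * (tprim α t x - tprim α s x)
        + wt κ x * Real.exp (l * w t x) * (tprim β t x - tprim β s x)) := by
  rw [← S.ibp hκ hl hs ht, ← integral_const_mul]
  unfold en
  rw [← integral_sub (S.en_int hκ hl ht) (S.en_int hκ hl hs)]
  have cD : Continuous (fun x => w t x - w s x) := (S.cw t ht).sub (S.cw s hs)
  have bD : ∀ y, |w t y - w s y| ≤ 2 * bd t1 Cf Ca Cb := fun y => by
    refine (abs_sub _ _).trans ?_
    linarith [S.bound hs y, S.bound ht y]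
  have i1 : Integrable (fun x => wt κ x * Real.exp (l * w t x) * (w t x - w s x)) :=
    (S.en_int hκ hl ht).mul_bdd cD.aestronglyMeasurable (Eventually.of_forall bD)
  refine integral_mono ((S.en_int hκ hl ht).sub (S.en_int hκ hl hs)) (i1.const_mul l) ?_
  intro x
  have h1 := Real.add_one_le_exp (l * w s x - l * w t x)
  have h2 : Real.exp (l * w s x) = Real.exp (l * w t x) * Real.exp (l * w s x - l * w t x) := by
    rw [← Real.exp_add]; ring_nf
  have h3 := mul_le_mul_of_nonneg_left h1 (Real.exp_pos (l * w t x)).le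
  rw [← h2] at h3
  have h4 := mul_le_mul_of_nonneg_left h3 (wt_pos κ x).le
  show wt κ x * Real.exp (l * w t x) - wt κ x * Real.exp (l * w s x) ≤
    l * (wt κ x * Real.exp (l * w t x) * (w t x - w s x))
  linarith

/-- bound for the right derivative of the energy -/
def enD (κ l : ℝ) (f α β w : ℝ → ℝ → ℝ) (s : ℝ) : ℝ :=
  l * ∫ x, -(dphi κ l f w s x * α s x + wt κ x * Real.exp (l * w s x) * β s x)

lemma en_deriv (S : Sys t1 Cf Ca Cb f α β w) {κ l : ℝ} (hκ : 0 < κ) (hl : 0 ≤ l) {s : ℝ}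
    (hs : s ∈ Ico 0 t1) (r : ℝ) (hr : enD κ l f α β w s < r) :
    ∀ᶠ t in 𝓝[>] s, (t - s)⁻¹ * (en κ l w t - en κ l w s) < r := by
  have hs' : s ∈ Icc 0 t1 := ⟨hs.1, hs.2.le⟩
  have hev : ∀ᶠ t in 𝓝[>] s, t ∈ Icc 0 t1 ∧ s < t := by
    filter_upwards [Ioo_mem_nhdsGT hs.2] with t ht
    exact ⟨⟨hs.1.trans ht.1.le, ht.2.le⟩, ht.1⟩
  have hle : 𝓝[>] s ≤ 𝓝[Icc 0 t1] s := by
    refine le_inf nhdsWithin_le_nhds ?_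
    exact le_principal_iff.2 (hev.mono fun t ht => ht.1)
  have lim : Tendsto (fun t => l * ∫ x, -(dphi κ l f w t x
        * ((t - s)⁻¹ * (tprim α t x - tprim α s x))
        + wt κ x * Real.exp (l * w t x) * ((t - s)⁻¹ * (tprim β t x - tprim β s x))))
      (𝓝[>] s) (𝓝 (enD κ l f α β w s)) := by
    refine Tendsto.const_mul l ?_
    have quot : ∀ {C : ℝ} {h : ℝ → ℝ → ℝ}, Nice C h → ∀ t x, s < t →
        |(t - s)⁻¹ * (tprim h t x - tprim h s x)| ≤ C := by
      intro C h hh t x hst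
      have hp : 0 < t - s := sub_pos.2 hst
      rw [abs_mul, abs_inv, abs_of_pos hp, inv_mul_le_iff₀ hp, mul_comm]
      simpa [abs_of_pos hp] using tprim_lip hh s t x
    refine tendsto_integral_filter_of_dominated_convergence
      (fun x => wt κ x * ((Real.exp (l * bd t1 Cf Ca Cb) * (κ + l * Cf)) * Ca
        + Real.exp (l * bd t1 Cf Ca Cb) * Cb)) ?_ ?_ ((wt_int hκ).mul_const _) ?_
    · filter_upwards [hev] with t ht
      have m1 := S.dphi_meas κ l ht.1
      have m2 := (S.en_cont_x κ l ht.1).measurable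
      have m3 := tprim_meas S.na t
      have m4 := tprim_meas S.na s
      have m5 := tprim_meas S.nb t
      have m6 := tprim_meas S.nb s
      exact ((m1.mul ((m3.sub m4).const_mul _)).add
        (m2.mul ((m5.sub m6).const_mul _))).neg.aestronglyMeasurable
    · filter_upwards [hev] with t ht
      refine Eventually.of_forall fun x => ?_
      rw [norm_neg]
      refine (norm_add_le _ _).trans ?_
      rw [norm_mul, norm_mul (wt κ x * Real.exp (l * w t x))]
      have a1 := mul_le_mul (S.dphi_bd hκ hl ht.1 x) (quot S.na t x ht.2) (abs_nonneg _)
        (by have := wt_pos κ x; have := S.nf.C_nonneg; positivity)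
      have a2 := mul_le_mul (S.en_bd κ hl ht.1 x) (quot S.nb t x ht.2) (abs_nonneg _)
        (by have := wt_pos κ x; positivity)
      simp only [Real.norm_eq_abs] at a1 a2 ⊢
      linarith
    · filter_upwards [tprim_deriv S.na s, tprim_deriv S.nb s, S.nf.tc s] with x h1 h2 h3
      have q : ∀ {h : ℝ → ℝ → ℝ}, HasDerivAt (fun s => tprim h s x) (h s x) s →
          Tendsto (fun t => (t - s)⁻¹ * (tprim h t x - tprim h s x)) (𝓝[>] s) (𝓝 (h s x)) := by
        intro h hd
        have := hd.hasDerivWithinAt (s := Ioi s)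
        rw [hasDerivWithinAt_iff_tendsto_slope' (by simp)] at this
        exact this
      have lw : Tendsto (fun t => Real.exp (l * w t x)) (𝓝[>] s) (𝓝 (Real.exp (l * w s x))) :=
        (Real.continuous_exp.tendsto _).comp
          (((S.tcont x s hs').tendsto.mono_left hle).const_mul l)
      have lf : Tendsto (fun t => f t x) (𝓝[>] s) (𝓝 (f s x)) :=
        h3.tendsto.mono_left nhdsWithin_le_nhds
      refine Tendsto.neg (Tendsto.add (Tendsto.mul ?_ (q h1)) (Tendsto.mul ?_ (q h2)))
      · exact lw.mul (tendsto_const_nhds.add ((lf.const_mul _).const_mul l))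
      · exact lw.const_mul _
  filter_upwards [hev, lim.eventually_lt_const hr] with t ht hlt
  refine lt_of_le_of_lt ?_ hlt
  have hp : 0 < t - s := sub_pos.2 ht.2
  have := mul_le_mul_of_nonneg_left (S.en_diff hκ hl hs' ht.1) (inv_pos.2 hp).le
  refine this.trans (le_of_eq ?_)
  rw [mul_left_comm, ← integral_const_mul]
  congr 1
  refine integral_congr_ae (Eventually.of_forall fun x => ?_)
  simp only
  ring

lemma enD_le (S : Sys t1 Cf Ca Cb f α β w) {κ l δ M : ℝ} (hκ : 0 < κ) (hl : 0 ≤ l)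
    (hM : ∀ t x, |β t x| ≤ δ + M * (f t x * α t x)) (hlM : M ≤ l) {s : ℝ}
    (hs : s ∈ Icc 0 t1) :
    enD κ l f α β w s ≤ (l * (κ * Ca + δ)) * en κ l w s := by
  unfold enD en
  rw [mul_assoc]
  refine mul_le_mul_of_nonneg_left ?_ hl
  rw [← integral_const_mul]
  have i3 : Integrable (fun x => dphi κ l f w s x * α s x) :=
    (S.dphi_int hκ hl hs).mul_bdd (S.na.meas_x s).aestronglyMeasurable
      (Eventually.of_forall (S.na.bdd s))
  have i4 : Integrable (fun x => wt κ x * Real.exp (l * w s x) * β s x) :=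
    (S.en_int hκ hl hs).mul_bdd (S.nb.meas_x s).aestronglyMeasurable
      (Eventually.of_forall (S.nb.bdd s))
  refine integral_mono (i3.add i4).neg ((S.en_int hκ hl hs).const_mul _) ?_
  intro x
  have hw := wt_pos κ x
  have he := Real.exp_pos (l * w s x)
  have h1 : -(wt' κ x * α s x) ≤ wt κ x * (κ * Ca) := by
    refine (neg_le_abs _).trans ?_
    rw [abs_mul]
    have := mul_le_mul (wt'_le hκ x) (S.na.bdd s x) (abs_nonneg _) (by positivity)
    linarith
  have h2 : -(β s x) - l * (f s x * α s x) ≤ δ := by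
    have a1 := (neg_le_abs _).trans (hM s x)
    have a2 := mul_le_mul_of_nonneg_right hlM (S.mono s x)
    linarith
  have h3 := mul_le_mul_of_nonneg_left h2 hw.le
  have h4 := mul_le_mul_of_nonneg_left (add_le_add h1 h3) he.le
  show -(dphi κ l f w s x * α s x + wt κ x * Real.exp (l * w s x) * β s x) ≤
    (κ * Ca + δ) * (wt κ x * Real.exp (l * w s x))
  unfold dphi
  linarith

lemma en_le (S : Sys t1 Cf Ca Cb f α β w) {κ l δ M : ℝ} (hκ : 0 < κ) (hl : 0 ≤ l)
    (hM : ∀ t x, |β t x| ≤ δ + M * (f t x * α t x)) (hlM : M ≤ l) {t : ℝ}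
    (ht : t ∈ Icc 0 t1) :
    en κ l w t ≤ (∫ x, wt κ x) * Real.exp (l * (κ * Ca + δ) * t) := by
  have := le_gronwallBound_of_liminf_deriv_right_le (f := en κ l w) (f' := enD κ l f α β w)
    (δ := ∫ x, wt κ x) (K := l * (κ * Ca + δ)) (ε := 0) (a := 0) (b := t1)
    (S.en_cont hκ hl) (fun s hs r hr => (S.en_deriv hκ hl hs r hr).frequently)
    (by simp [en, S.w_zero])
    (fun s hs => by rw [add_zero]; exact S.enD_le hκ hl hM hlM ⟨hs.1, hs.2.le⟩) t ht
  rwa [gronwallBound_ε0, sub_zero] at this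

lemma w_le (S : Sys t1 Cf Ca Cb f α β w) {κ δ : ℝ} (hκ : 0 < κ) (hδ : 0 < δ)
    {t : ℝ} (ht : t ∈ Icc 0 t1) (x : ℝ) : w t x ≤ (κ * Ca + δ) * t := by
  by_contra hc
  push Not at hc
  obtain ⟨M, hM⟩ := S.ctrl δ hδ
  set q := (κ * Ca + δ) * t with hq
  set θ := (w t x - q) / 2 with hθ
  have hθp : 0 < θ := by rw [hθ]; linarith
  have hnear : ∀ᶠ y in 𝓝 x, q + θ < w t y :=
    (S.cw t ht).continuousAt.eventually_const_lt (by rw [hθ]; linarith)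
  obtain ⟨r, hr, hball⟩ := Metric.eventually_nhds_iff_ball.1 hnear
  set c := ∫ y in Metric.ball x r, wt κ y with hcdef
  have hcpos : 0 < c := by
    rw [hcdef, setIntegral_pos_iff_support_of_nonneg_ae
      (Eventually.of_forall fun y => (wt_pos κ y).le) (wt_int hκ).integrableOn]
    have : support (wt κ) = univ := by
      ext y; simp [(wt_pos κ y).ne']
    rw [this, univ_inter]
    exact Metric.measure_ball_pos _ _ hr
  set J := ∫ y, wt κ y with hJ
  have hl : ∀ l : ℝ, 0 ≤ l → M ≤ l → c * Real.exp (l * θ) ≤ J := by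
    intro l hl hlM
    have h1 := S.en_le hκ hl hM hlM ht
    have h2 : c * Real.exp (l * (q + θ)) ≤ en κ l w t := by
      rw [hcdef, ← integral_mul_const]
      unfold en
      refine le_trans ?_ (setIntegral_le_integral (s := Metric.ball x r) (S.en_int hκ hl ht)
        (Eventually.of_forall fun y => (mul_pos (wt_pos κ y) (Real.exp_pos _)).le))
      refine setIntegral_mono_on ((wt_int hκ).mul_const _).integrableOn
        (S.en_int hκ hl ht).integrableOn measurableSet_ball ?_
      intro y hy
      exact mul_le_mul_of_nonneg_left (Real.exp_le_exp.2
        (mul_le_mul_of_nonneg_left (hball y hy).le hl)) (wt_pos κ y).le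
    have h3 := h2.trans h1
    rw [mul_add, Real.exp_add, mul_assoc l, ← hq] at h3
    have he := Real.exp_pos (l * q)
    nlinarith
  have ltop : Tendsto (fun l : ℝ => c * Real.exp (l * θ)) atTop atTop :=
    (Real.tendsto_exp_atTop.comp (tendsto_id.atTop_mul_const hθp)).const_mul_atTop hcpos
  obtain ⟨l, h1, h2, h3⟩ := ((ltop.eventually_gt_atTop J).and
    ((eventually_ge_atTop 0).and (eventually_ge_atTop M))).exists
  exact absurd (hl l h2 h3) (not_le.2 h1)

lemma w_nonpos (S : Sys t1 Cf Ca Cb f α β w) {t : ℝ} (ht : t ∈ Icc 0 t1) (x : ℝ) :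
    w t x ≤ 0 := by
  have lim : Tendsto (fun κ : ℝ => (κ * Ca + κ) * t) (𝓝[>] 0) (𝓝 ((0 * Ca + 0) * t)) :=
    (Continuous.tendsto (by fun_prop) 0).mono_left nhdsWithin_le_nhds
  simp only [zero_mul, add_zero] at lim
  refine ge_of_tendsto lim ?_
  filter_upwards [self_mem_nhdsWithin] with κ hκ
  exact S.w_le hκ hκ ht x

lemma f_zero (S : Sys t1 Cf Ca Cb f α β w) {t : ℝ} (ht : t ∈ Icc 0 t1) (x : ℝ) :
    f t x = 0 := by
  have e : w t = fun _ => 0 := by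
    funext y
    have h1 := S.w_nonpos ht y
    have h2 := S.neg.w_nonpos ht y
    linarith
  have h := S.dw t ht x
  rw [e] at h
  exact (uniqueDiffWithinAt_Ioi x).eq_deriv _ h (hasDerivWithinAt_const _ _ _)

end Sys

/-- clamp to the unit interval -/
def cl1 (u : ℝ) : ℝ := max 0 (min u 1)

lemma cl1_mem (u : ℝ) : cl1 u ∈ Icc (0:ℝ) 1 := by
  unfold cl1
  exact ⟨le_max_left _ _, max_le zero_le_one (min_le_right _ _)⟩

lemma cl1_eq {u : ℝ} (hu : u ∈ Icc (0:ℝ) 1) : cl1 u = u := by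
  unfold cl1
  rw [min_eq_left hu.2, max_eq_right hu.1]

lemma cl1_cont : Continuous cl1 := by unfold cl1; fun_prop

lemma prim_contOn {a : ℝ → ℝ} (ha : ContinuousOn a (Icc 0 1)) :
    ContinuousOn (primitive a) (Icc 0 1) := by
  unfold primitive
  have := intervalIntegral.continuousOn_primitive_interval (μ := volume) (f := a) (a := 0) (b := 1)
    (by rw [uIcc_of_le zero_le_one]; exact ha.integrableOn_Icc)
  rwa [uIcc_of_le zero_le_one] at this

lemma ext_props {A : ℝ → ℝ} (hA : ContinuousOn A (Icc 0 1)) :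
    Continuous (fun u => A (cl1 u)) ∧ ∃ C, ∀ u, |A (cl1 u)| ≤ C := by
  refine ⟨hA.comp_continuous cl1_cont cl1_mem, ?_⟩
  obtain ⟨C, hC⟩ := isCompact_Icc.exists_bound_of_continuousOn hA
  exact ⟨C, fun u => hC _ (cl1_mem u)⟩

lemma ctrl_lemma {A B : ℝ → ℝ} (hA : ContinuousOn A (Icc 0 1)) (hB : ContinuousOn B (Icc 0 1))
    (hm : StrictMonoOn A (Icc 0 1)) {δ : ℝ} (hδ : 0 < δ) :
    ∃ M : ℝ, ∀ u ∈ Icc (0:ℝ) 1, ∀ v ∈ Icc (0:ℝ) 1,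
      |B u - B v| ≤ δ + M * ((u - v) * (1/2 * A u - 1/2 * A v)) := by
  have pos : ∀ u ∈ Icc (0:ℝ) 1, ∀ v ∈ Icc (0:ℝ) 1, u ≠ v →
      0 < (u - v) * (1/2 * A u - 1/2 * A v) := by
    intro u hu v hv hne
    rcases lt_or_gt_of_ne hne with h | h
    · have := hm hu hv h
      nlinarith
    · have := hm hv hu h
      nlinarith
  have huc := isCompact_Icc.uniformContinuousOn_of_continuous hB
  rw [Metric.uniformContinuousOn_iff] at huc
  obtain ⟨η, hη, huc⟩ := huc δ hδ
  obtain ⟨C, hC⟩ := isCompact_Icc.exists_bound_of_continuousOn hB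
  set K : Set (ℝ × ℝ) := (Icc (0:ℝ) 1 ×ˢ Icc (0:ℝ) 1) ∩ {p | η ≤ dist p.1 p.2} with hK
  have cK : IsCompact K :=
    (isCompact_Icc.prod isCompact_Icc).inter_right (isClosed_le continuous_const (by fun_prop))
  have cp : ContinuousOn (fun p : ℝ × ℝ => (p.1 - p.2) * (1/2 * A p.1 - 1/2 * A p.2)) K := by
    have h1 : ContinuousOn (fun p : ℝ × ℝ => A p.1) K :=
      hA.comp continuousOn_fst (fun p hp => hp.1.1)
    have h2 : ContinuousOn (fun p : ℝ × ℝ => A p.2) K :=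
      hA.comp continuousOn_snd (fun p hp => hp.1.2)
    exact (continuousOn_fst.sub continuousOn_snd).mul
      ((continuousOn_const.mul h1).sub (continuousOn_const.mul h2))
  obtain ⟨c, hc, hcK⟩ := cK.exists_forall_le' cp (a := 0) (by
    rintro ⟨u, v⟩ ⟨⟨hu, hv⟩, hd⟩
    refine pos u hu v hv ?_
    rintro rfl
    simp at hd
    linarith)
  have hC0 : 0 ≤ C := (norm_nonneg _).trans (hC 0 ⟨le_rfl, zero_le_one⟩)
  refine ⟨2 * C / c, fun u hu v hv => ?_⟩
  have hnn : 0 ≤ (u - v) * (1/2 * A u - 1/2 * A v) := by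
    by_cases h : u = v
    · simp [h]
    · exact (pos u hu v hv h).le
  by_cases hd : dist u v < η
  · have := huc u hu v hv hd
    rw [Real.dist_eq] at this
    have : 0 ≤ 2 * C / c * ((u - v) * (1/2 * A u - 1/2 * A v)) := by positivity
    linarith
  · have h1 := hcK (u, v) ⟨⟨hu, hv⟩, not_lt.1 hd⟩
    have h2 : 2 * C / c * c ≤ 2 * C / c * ((u - v) * (1/2 * A u - 1/2 * A v)) :=
      mul_le_mul_of_nonneg_left h1 (by positivity)
    rw [div_mul_cancel₀ _ hc.ne'] at h2
    have h3 : |B u - B v| ≤ C + C := (abs_sub _ _).trans (add_le_add (hC u hu) (hC v hv))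
    linarith

/-- weak formulation against time independent test functions -/
lemma weak_single {A B F₀ : ℝ → ℝ} {T : ℝ≥0∞} {F G : ℝ → ℝ → ℝ} {t1 CA CB : ℝ}
    (hw : IsWeakSolutionOn A B F₀ T F) (ht1 : 0 ≤ t1) (hT : ENNReal.ofReal t1 < T)
    (hG : ∀ s ∈ Icc 0 t1, ∀ x, G s x = F s x) (hG1 : ∀ s x, G s x ∈ Icc (0:ℝ) 1)
    (nA : Nice CA (fun s x => 1/2 * A (cl1 (G s x)))) (nB : Nice CB (fun s x => B (cl1 (G s x))))
    {g : ℝ → ℝ} (hg : ContDiff ℝ (⊤ : ℕ∞) g) (hgs : HasCompactSupport g)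
    {t : ℝ} (ht : t ∈ Icc 0 t1) :
    (∫ x, G t x * g x) - ∫ x, F₀ x * g x =
      ∫ x, (tprim (fun s x => 1/2 * A (cl1 (G s x))) t x * deriv (deriv g) x
        + tprim (fun s x => B (cl1 (G s x))) t x * deriv g x) := by
  obtain ⟨r, hr0, hr1, hr2⟩ := ENNReal.lt_iff_exists_real_btwn.1 hT
  have htr : t1 < r := ((ENNReal.ofReal_lt_ofReal_iff').1 hr1).1
  let χ : ContDiffBump (0:ℝ) := ⟨(t1 + r) / 2, r, by linarith, by linarith⟩
  have hχ1 : ∀ s ∈ Icc 0 t1, χ s = 1 := by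
    intro s hs
    apply χ.one_of_mem_closedBall
    rw [mem_closedBall_zero_iff, Real.norm_eq_abs, abs_of_nonneg hs.1]
    show s ≤ (t1 + r) / 2
    linarith [hs.2]
  have hχd : ∀ s ∈ Icc 0 t1, deriv (χ : ℝ → ℝ) s = 0 := by
    intro s hs
    have : (χ : ℝ → ℝ) =ᶠ[𝓝 s] fun _ => 1 := by
      refine χ.eventuallyEq_one_of_mem_ball ?_
      rw [mem_ball_zero_iff, Real.norm_eq_abs, abs_of_nonneg hs.1]
      show s < (t1 + r) / 2
      linarith [hs.2]
    rw [this.deriv_eq]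
    simp
  have hsupp : ∀ s x, χ s * g x ≠ 0 → s ∈ Metric.closedBall 0 r ∧ x ∈ tsupport g := by
    intro s x h
    refine ⟨?_, subset_tsupport g (right_ne_zero_of_mul h)⟩
    have : s ∈ support (χ : ℝ → ℝ) := left_ne_zero_of_mul h
    rw [χ.support_eq] at this
    exact Metric.ball_subset_closedBall this
  have htd : Icc 0 t ⊆ Icc 0 t1 := Icc_subset_Icc_right ht.2
  have key := hw (fun s x => χ s * g x)
    ((χ.contDiff.comp contDiff_fst).mul (hg.comp contDiff_snd))
    (HasCompactSupport.intro (K := Metric.closedBall 0 r ×ˢ tsupport g)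
      ((isCompact_closedBall _ _).prod hgs) (by
        rintro ⟨s, x⟩ h
        by_contra hne
        exact h (hsupp s x hne)))
    (by
      have : tsupport (uncurry fun s x => χ s * g x) ⊆ Prod.fst ⁻¹' (Metric.closedBall (0:ℝ) r) := by
        refine closure_minimal ?_ (Metric.isClosed_closedBall.preimage continuous_fst)
        rintro ⟨s, x⟩ h
        exact (hsupp s x h).1
      intro q hq
      have h1 := this hq
      rw [mem_preimage, mem_closedBall_zero_iff, Real.norm_eq_abs] at h1
      exact lt_of_le_of_lt (ENNReal.ofReal_le_ofReal ((le_abs_self _).trans h1)) hr2)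
    t ht.1 (lt_of_le_of_lt (ENNReal.ofReal_le_ofReal ht.2) hT)
  have e1 : ∀ x, χ t * g x * F t x = G t x * g x := by
    intro x; rw [hχ1 t ht, hG t ht]; ring
  have e2 : ∀ x, χ 0 * g x * F₀ x = F₀ x * g x := by
    intro x; rw [hχ1 0 ⟨le_rfl, ht1⟩]; ring
  simp only [e1, e2] at key
  rw [key]
  refine integral_congr_ae (Eventually.of_forall fun x => ?_)
  simp only [tprim]
  rw [← intervalIntegral.integral_mul_const, ← intervalIntegral.integral_mul_const,
    ← intervalIntegral.integral_add ((nA.int_t x 0 t).mul_const _) ((nB.int_t x 0 t).mul_const _)]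
  refine intervalIntegral.integral_congr fun s hs => ?_
  rw [uIcc_of_le ht.1] at hs
  have hs := htd hs
  have d1 : deriv (fun y => χ s * g y) = deriv g := by
    rw [hχ1 s hs]; simp
  have d2 : deriv (fun r => χ r * g x) s = 0 := by
    rw [deriv_mul_const_field, hχd s hs, zero_mul]
  have hcl : cl1 (F s x) = F s x := by rw [← hG s hs x]; exact cl1_eq (hG1 s x)
  simp only [d1, d2, hG s hs x, hcl]
  ring

lemma tprim_of_sub {C D : ℝ} {h k : ℝ → ℝ → ℝ} (hh : Nice C h) (hk : Nice D k) (t x : ℝ) :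
    tprim (fun s x => h s x - k s x) t x = tprim h t x - tprim k t x := by
  unfold tprim
  exact intervalIntegral.integral_sub (hh.int_t x _ _) (hk.int_t x _ _)

/-- Under (D1), two elements of `𝓕(T)` satisfying the weak formulation of the Cauchy
problem with the same initial condition `H*m` coincide on `[0,T) × ℝ`. -/
theorem uniqueness_weak_solution
    (a b : ℝ → ℝ)
    (ha : ContinuousOn a (Set.Icc 0 1)) (hb : ContinuousOn b (Set.Icc 0 1))
    (ha0 : ∀ u ∈ Set.Icc (0:ℝ) 1, 0 ≤ a u)
    (hD1 : StrictMonoOn (primitive a) (Set.Icc 0 1))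
    (m : Measure ℝ) [IsProbabilityMeasure m]
    (T : ℝ≥0∞) (hT : 0 < T)
    (F₁ F₂ : ℝ → ℝ → ℝ)
    (hF₁ : IsWeakSolutionOn (primitive a) (primitive b) (cdfOf m) T F₁)
    (hF₁mem : MemFT T F₁)
    (hF₂ : IsWeakSolutionOn (primitive a) (primitive b) (cdfOf m) T F₂)
    (hF₂mem : MemFT T F₂) :
    ∀ t : ℝ, 0 ≤ t → ENNReal.ofReal t < T → ∀ x : ℝ, F₁ t x = F₂ t x := by
  intro t1 ht1 hT1 x1
  obtain ⟨P₁, cP₁, -, -, hP₁⟩ := hF₁mem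
  obtain ⟨P₂, cP₂, -, -, hP₂⟩ := hF₂mem
  set A := primitive a with hA
  set B := primitive b with hB
  have cA : ContinuousOn A (Icc 0 1) := prim_contOn ha
  have cB : ContinuousOn B (Icc 0 1) := prim_contOn hb
  set c : ℝ → ℝ := fun s => max 0 (min s t1) with hc
  have cc : Continuous c := by rw [hc]; fun_prop
  have hcm : ∀ s, c s ∈ {t : ℝ | 0 ≤ t ∧ ENNReal.ofReal t < T} := fun s =>
    ⟨le_max_left _ _, lt_of_le_of_lt
      (ENNReal.ofReal_le_ofReal (max_le ht1 (min_le_right _ _))) hT1⟩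
  have hce : ∀ s ∈ Icc 0 t1, c s = s := by
    intro s hs
    simp only [hc]
    rw [min_eq_left hs.2, max_eq_right hs.1]
  have cQ₁ : Continuous (fun s => P₁ (c s)) := cP₁.comp_continuous cc hcm
  have cQ₂ : Continuous (fun s => P₂ (c s)) := cP₂.comp_continuous cc hcm
  set G₁ : ℝ → ℝ → ℝ := fun s x => ((P₁ (c s) : Measure ℝ) (Iic x)).toReal with hG₁
  set G₂ : ℝ → ℝ → ℝ := fun s x => ((P₂ (c s) : Measure ℝ) (Iic x)).toReal with hG₂
  have n₁ : Nice 1 G₁ := cdf_nice _ cQ₁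
  have n₂ : Nice 1 G₂ := cdf_nice _ cQ₂
  have m₁ : ∀ s x, G₁ s x ∈ Icc (0:ℝ) 1 := fun s x =>
    ⟨ENNReal.toReal_nonneg, (le_abs_self _).trans (n₁.bdd s x)⟩
  have m₂ : ∀ s x, G₂ s x ∈ Icc (0:ℝ) 1 := fun s x =>
    ⟨ENNReal.toReal_nonneg, (le_abs_self _).trans (n₂.bdd s x)⟩
  have e₁ : ∀ s ∈ Icc 0 t1, ∀ x, G₁ s x = F₁ s x := by
    intro s hs x
    have := hcm s
    simp only [hG₁]
    rw [hce s hs] at this ⊢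
    exact (hP₁ s this.1 this.2 x).symm
  have e₂ : ∀ s ∈ Icc 0 t1, ∀ x, G₂ s x = F₂ s x := by
    intro s hs x
    have := hcm s
    simp only [hG₂]
    rw [hce s hs] at this ⊢
    exact (hP₂ s this.1 this.2 x).symm
  obtain ⟨xA, CA, bA⟩ := ext_props (A := fun u => 1/2 * A u) (continuousOn_const.mul cA)
  obtain ⟨xB, CB, bB⟩ := ext_props cB
  have nA₁ : Nice CA (fun s x => 1/2 * A (cl1 (G₁ s x))) := n₁.comp xA bA
  have nA₂ : Nice CA (fun s x => 1/2 * A (cl1 (G₂ s x))) := n₂.comp xA bA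
  have nB₁ : Nice CB (fun s x => B (cl1 (G₁ s x))) := n₁.comp xB bB
  have nB₂ : Nice CB (fun s x => B (cl1 (G₂ s x))) := n₂.comp xB bB
  have nf := n₁.sub n₂
  have na := nA₁.sub nA₂
  have nb := nB₁.sub nB₂
  have W : ∀ t : ℝ, t ∈ Icc 0 t1 → ∃ w : ℝ → ℝ, Continuous w ∧
      Continuous (tprim (fun s x => 1/2 * A (cl1 (G₁ s x)) - 1/2 * A (cl1 (G₂ s x))) t) ∧
      (∀ x, HasDerivWithinAt w (G₁ t x - G₂ t x) (Ioi x) x) ∧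
      ∀ x, HasDerivWithinAt
        (tprim (fun s x => 1/2 * A (cl1 (G₁ s x)) - 1/2 * A (cl1 (G₂ s x))) t)
        (w x + tprim (fun s x => B (cl1 (G₁ s x)) - B (cl1 (G₂ s x))) t x) (Ioi x) x := by
    intro t ht
    refine weak_to_strong (nf.meas_x t) (tprim_meas na t) (tprim_meas nb t) (nf.bdd t)
      (tprim_bdd na t) (tprim_bdd nb t) (nf.rc t) (tprim_rc na t) (tprim_rc nb t) ?_
    intro g hg hgs
    have w₁ := weak_single hF₁ ht1 hT1 e₁ m₁ nA₁ nB₁ hg hgs ht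
    have w₂ := weak_single hF₂ ht1 hT1 e₂ m₂ nA₂ nB₂ hg hgs ht
    have hg1 : ContDiff ℝ (⊤ : ℕ∞) (deriv g) := (contDiff_infty_iff_deriv.1 hg).2
    have hg2 : ContDiff ℝ (⊤ : ℕ∞) (deriv (deriv g)) := (contDiff_infty_iff_deriv.1 hg1).2
    have ia : ∀ {C : ℝ} {h : ℝ → ℝ → ℝ}, Nice C h →
        Integrable (fun x => tprim h t x * deriv (deriv g) x) := fun hh =>
      li_mul (li_of_bdd (tprim_meas hh t) (tprim_bdd hh t)) hg2.continuous hgs.deriv.deriv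
    have ib : ∀ {C : ℝ} {h : ℝ → ℝ → ℝ}, Nice C h →
        Integrable (fun x => tprim h t x * deriv g x) := fun hh =>
      li_mul (li_of_bdd (tprim_meas hh t) (tprim_bdd hh t)) hg1.continuous hgs.deriv
    have j₁ : Integrable (fun x => G₁ t x * g x) :=
      li_mul (li_of_bdd (n₁.meas_x t) (n₁.bdd t)) hg.continuous hgs
    have j₂ : Integrable (fun x => G₂ t x * g x) :=
      li_mul (li_of_bdd (n₂.meas_x t) (n₂.bdd t)) hg.continuous hgs
    have l : ∫ x, (G₁ t x - G₂ t x) * g x = (∫ x, G₁ t x * g x) - ∫ x, G₂ t x * g x := by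
      rw [← integral_sub j₁ j₂]
      simp_rw [sub_mul]
    have r := integral_sub ((ia nA₁).add (ib nB₁)) ((ia nA₂).add (ib nB₂))
    simp only [Pi.add_apply] at r
    rw [l]
    have : (∫ x, G₁ t x * g x) - ∫ x, G₂ t x * g x
      = ((∫ x, G₁ t x * g x) - ∫ x, cdfOf m x * g x)
        - ((∫ x, G₂ t x * g x) - ∫ x, cdfOf m x * g x) := by ring
    rw [this, w₁, w₂, ← r]
    refine integral_congr_ae (Eventually.of_forall fun x => ?_)
    simp only
    rw [tprim_of_sub nA₁ nA₂, tprim_of_sub nB₁ nB₂]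
    ring
  choose! w hw using W
  have S : Sys t1 (1 + 1) (CA + CA) (CB + CB) (fun t x => G₁ t x - G₂ t x)
      (fun s x => 1/2 * A (cl1 (G₁ s x)) - 1/2 * A (cl1 (G₂ s x)))
      (fun s x => B (cl1 (G₁ s x)) - B (cl1 (G₂ s x))) w :=
    { nf := nf
      na := na
      nb := nb
      ht1 := ht1
      cw := fun t ht => (hw t ht).1
      cK := fun t ht => (hw t ht).2.1
      dw := fun t ht => (hw t ht).2.2.1
      dK := fun t ht => (hw t ht).2.2.2
      mono := by
        intro t x
        simp only [cl1_eq (m₁ t x), cl1_eq (m₂ t x)]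
        rcases le_total (G₁ t x) (G₂ t x) with h | h
        · have := hD1.monotoneOn (m₁ t x) (m₂ t x) h
          exact mul_nonneg_of_nonpos_of_nonpos (by linarith) (by linarith)
        · have := hD1.monotoneOn (m₂ t x) (m₁ t x) h
          exact mul_nonneg (by linarith) (by linarith)
      ctrl := by
        intro δ hδ
        obtain ⟨M, hM⟩ := ctrl_lemma cA cB hD1 hδ
        refine ⟨M, fun t x => ?_⟩
        simp only [cl1_eq (m₁ t x), cl1_eq (m₂ t x)]
        exact hM _ (m₁ t x) _ (m₂ t x) }
  have hm : t1 ∈ Icc 0 t1 := ⟨ht1, le_rfl⟩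
  have this : G₁ t1 x1 - G₂ t1 x1 = 0 := S.f_zero hm x1
  rw [← e₁ t1 hm x1, ← e₂ t1 hm x1]
  linarith
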